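/- Let L be a finite-dimensional nilpotent Lie algebra of nilpotency class c over a field k with dim(L) = n and dim(γ₂(L)) = m, let π : F → L be a free presentation with R = ker(π), and let i satisfy 2 ≤ i ≤ min(n−m, c). Then the quotient vector space [F, γ_i(F) + R] / [γ_{i+1}(F) + R, F] has dimension at most (n−m)·dim(γ_i(L)/γ_{i+1}(L)) − (n−m−i). (Equivalently, the kernel of the surjective linear map λ_i : (L/γ₂(L)) ⊗ (γ_i(L)/γ_{i+1}(L)) → [F, γ_i(F)+R]/[γ_{i+1}(F)+R, F] induced by the bracket has dimension at least n−m−i.) -/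

import Mathlib

/-!
The bracket of `F` induces a bilinear map on `L/γ₂(L) × γ_i(L)/γ_{i+1}(L)` whose values span the
quotient `[F, γ_i(F) + R] / [γ_{i+1}(F) + R, F]`. As `γ_i(F)` is spanned by right-normed brackets
of `i` elements, one of these, `u = [y₁, [y₂, …, y_i]]`, is nonzero in `γ_i(L)/γ_{i+1}(L)`. By the
Jacobi identity every `[x, u]` lies in `∑ [y_l, γ_i(F)]`. Let `S` be the span of the `y_l`, so that
`dim S ≤ i`, and choose complements `S'` of `S` in `L/γ₂(L)` and `W'` of the line through `u` in
`γ_i(L)/γ_{i+1}(L)`: the values on `S × γ_i(L)/γ_{i+1}(L)` and on `S' × W'` already span, which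
saves `dim S' ≥ dim L/γ₂(L) - i` dimensions.
-/

section LinearAlgebra

open Submodule Cardinal

universe u v w

theorem add_natCast_sub_le_of_lift_add_le {r : Cardinal.{v}} {a b s : ℕ}
    (h : lift.{w} r + lift.{v} (a : Cardinal.{w}) ≤ lift.{v} ((b : Cardinal.{w}) + s))
    (hs : s ≤ a) : r + (a - s : ℕ) ≤ b := by
  rw [← add_nat_le_add_nat_iff s, add_assoc, ← Nat.cast_add, Nat.sub_add_cancel hs,
    ← lift_le.{w}]
  simpa using h

theorem rank_span_list_le {k V : Type*} [Ring k] [StrongRankCondition k] [AddCommGroup V]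
    [Module k V] (l : List V) : Module.rank k (span k {y | y ∈ l}) ≤ l.length := by
  classical
  rw [← List.coe_toFinset]
  exact (rank_span_finset_le _).trans (mod_cast l.toFinset_card_le)

theorem rank_quotient_comap_subtype {k V : Type*} [Ring k] [AddCommGroup V] [Module k V]
    (A B : Submodule k V) :
    Module.rank k (A ⧸ B.comap A.subtype) = Module.rank k (A.map B.mkQ) := by
  have hker : LinearMap.ker (B.mkQ ∘ₗ A.subtype) = B.comap A.subtype := by
    rw [LinearMap.ker_comp, ker_mkQ]
  have hrange : LinearMap.range (B.mkQ ∘ₗ A.subtype) = A.map B.mkQ := by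
    rw [LinearMap.range_comp, range_subtype]
  rw [← hker, ← hrange, (B.mkQ ∘ₗ A.subtype).quotKerEquivRange.rank_eq]

theorem map₂_compl₂_subtype_top {R M N P : Type*} [CommSemiring R] [AddCommMonoid M]
    [AddCommMonoid N] [AddCommMonoid P] [Module R M] [Module R N] [Module R P]
    (f : M →ₗ[R] N →ₗ[R] P) (p : Submodule R M) (q : Submodule R N) :
    map₂ (f.compl₂ q.subtype) p ⊤ = map₂ f p q := by
  rw [← map₂_map_right, map_subtype_top]

theorem exists_compl₁₂_eq_of_surjective {R M N V W P : Type*} [CommRing R] [AddCommGroup M]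
    [AddCommGroup N] [AddCommGroup V] [AddCommGroup W] [AddCommGroup P] [Module R M] [Module R N]
    [Module R V] [Module R W] [Module R P] {f : M →ₗ[R] N →ₗ[R] P} {p : M →ₗ[R] V}
    {q : N →ₗ[R] W} (hp : Function.Surjective p) (hq : Function.Surjective q)
    (hpf : LinearMap.ker p ≤ LinearMap.ker f) (hqf : LinearMap.ker q ≤ LinearMap.ker f.flip) :
    ∃ g : V →ₗ[R] W →ₗ[R] P, g.compl₁₂ p q = f := by
  refine ⟨(f.liftQ₂ _ _ hpf hqf).compl₁₂ (p.quotKerEquivOfSurjective hp).symm.toLinearMap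
    (q.quotKerEquivOfSurjective hq).symm.toLinearMap, ?_⟩
  ext x y
  have hx : (p.quotKerEquivOfSurjective hp).symm (p x) = Submodule.Quotient.mk x := by
    rw [LinearEquiv.symm_apply_eq]; rfl
  have hy : (q.quotKerEquivOfSurjective hq).symm (q y) = Submodule.Quotient.mk y := by
    rw [LinearEquiv.symm_apply_eq]; rfl
  simp [hx, hy]

variable {k : Type u} [Field k] {V W : Type v} {Z : Type w} [AddCommGroup V] [Module k V]
  [AddCommGroup W] [Module k W] [AddCommGroup Z] [Module k Z]

theorem lift_rank_map₂_le (β : V →ₗ[k] W →ₗ[k] Z) (p : Submodule k V) (q : Submodule k W) :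
    lift.{v} (Module.rank k (map₂ β p q)) ≤
      lift.{w} (Module.rank k p * Module.rank k q) := by
  rw [TensorProduct.map₂_eq_range_lift_comp_mapIncl, ← rank_tensorProduct']
  exact lift_rank_range_le _

theorem lift_rank_map₂_top_add_lift_rank_le (β : V →ₗ[k] W →ₗ[k] Z) (S : Submodule k V) {w₀ : W}
    (hw₀ : w₀ ≠ 0) (hS : ∀ x, β x w₀ ∈ map₂ β S ⊤) :
    lift.{v} (Module.rank k (map₂ β ⊤ ⊤)) + lift.{w} (Module.rank k V) ≤
      lift.{w} (Module.rank k V * Module.rank k W + Module.rank k S) := by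
  obtain ⟨S', hS'⟩ := S.exists_isCompl
  obtain ⟨W', hW'⟩ := (k ∙ w₀).exists_isCompl
  have hsup : map₂ β ⊤ ⊤ ≤ map₂ β S ⊤ ⊔ map₂ β S' W' := by
    rw [← hW'.sup_eq_top, map₂_sup_right, hW'.sup_eq_top, map₂_span_singleton_eq_map_flip,
      ← hS'.sup_eq_top, map₂_sup_left]
    refine sup_le ?_ (sup_le_sup_right (map₂_le_map₂_right le_top) _)
    rintro _ ⟨x, -, rfl⟩
    exact mem_sup_left (hS x)
  have hV : Module.rank k V = Module.rank k S + Module.rank k S' := by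
    rw [← (S.prodEquivOfIsCompl S' hS').rank_eq, rank_prod']
  have hW : Module.rank k W = 1 + Module.rank k W' := by
    rw [← ((k ∙ w₀).prodEquivOfIsCompl W' hW').rank_eq, rank_prod',
      rank_span_set (LinearIndepOn.singleton hw₀), mk_singleton]
  calc lift.{v} (Module.rank k (map₂ β ⊤ ⊤)) + lift.{w} (Module.rank k V)
      ≤ lift.{v} (Module.rank k (map₂ β S ⊤) + Module.rank k (map₂ β S' W')) +
          lift.{w} (Module.rank k V) := by
        gcongr
        exact lift_le.2 <| (rank_mono hsup).trans (rank_add_le_rank_add_rank _ _)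
    _ ≤ lift.{w} (Module.rank k S * Module.rank k W + Module.rank k S' * Module.rank k W') +
          lift.{w} (Module.rank k V) := by
        rw [lift_add, lift_add]
        gcongr
        · simpa using lift_rank_map₂_le β S ⊤
        · exact lift_rank_map₂_le β S' W'
    _ = lift.{w} (Module.rank k V * Module.rank k W + Module.rank k S) := by
        rw [← lift_add, hV, hW]
        congr 1
        ring

theorem lift_rank_map₂_top_add_lift_rank_le_of_surjective {M N : Type*} [AddCommGroup M]
    [Module k M] [AddCommGroup N] [Module k N] {f : M →ₗ[k] N →ₗ[k] Z} {p : M →ₗ[k] V}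
    {q : N →ₗ[k] W} (hp : Function.Surjective p) (hq : Function.Surjective q)
    (hpf : LinearMap.ker p ≤ LinearMap.ker f) (hqf : LinearMap.ker q ≤ LinearMap.ker f.flip)
    (S : Submodule k M) {n₀ : N} (hn₀ : q n₀ ≠ 0) (hS : ∀ x, f x n₀ ∈ map₂ f S ⊤) :
    lift.{v} (Module.rank k (map₂ f ⊤ ⊤)) + lift.{w} (Module.rank k V) ≤
      lift.{w} (Module.rank k V * Module.rank k W + Module.rank k (S.map p)) := by
  obtain ⟨β, rfl⟩ := exists_compl₁₂_eq_of_surjective hp hq hpf hqf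
  have hmap (T : Submodule k M) : map₂ (β.compl₁₂ p q) T ⊤ = map₂ β (T.map p) ⊤ := by
    rw [← map₂_map_map, Submodule.map_top, LinearMap.range_eq_top.2 hq]
  rw [hmap, Submodule.map_top, LinearMap.range_eq_top.2 hp]
  simp only [hmap] at hS
  exact lift_rank_map₂_top_add_lift_rank_le β (S.map p) hn₀ (hp.forall.2 hS)

end LinearAlgebra

section LowerCentralSeries

open LieModule Submodule

variable (R L M : Type*) [CommRing R] [LieRing L] [LieAlgebra R L] [AddCommGroup M] [Module R M]
  [LieRingModule L M]

variable {R L M} in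
theorem lowerCentralSeries_eq_of_succ_eq {j t : ℕ}
    (h : lowerCentralSeries R L M (j + 1) = lowerCentralSeries R L M j) (hjt : j ≤ t) :
    lowerCentralSeries R L M t = lowerCentralSeries R L M j := by
  induction t, hjt using Nat.le_induction with
  | base => rfl
  | succ t _ ih => rw [lowerCentralSeries_succ, ih, ← lowerCentralSeries_succ, h]

variable [LieModule R L M]

/-- The bracket `L × M → M` of a Lie module, as a bilinear map. -/
abbrev bracketBilin : L →ₗ[R] M →ₗ[R] M :=
  (toEnd R L M : L →ₗ[R] Module.End R M)

variable {R L M}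

theorem lie_toSubmodule_eq_map₂ (I : LieIdeal R L) (N : LieSubmodule R L M) :
    (⁅I, N⁆ : LieSubmodule R L M).toSubmodule =
      map₂ (bracketBilin R L M) I.toSubmodule N.toSubmodule := by
  rw [LieSubmodule.lieIdeal_oper_eq_linear_span', map₂_eq_span_image2]
  rfl

theorem map₂_lowerCentralSeries_le (S : Submodule R L) (j : ℕ) :
    map₂ (bracketBilin R L M) S (lowerCentralSeries R L M j).toSubmodule ≤
      (lowerCentralSeries R L M (j + 1)).toSubmodule := by
  rw [lowerCentralSeries_succ, lie_toSubmodule_eq_map₂]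
  exact map₂_le_map₂_left le_top

theorem lowerCentralSeries_eq_span_foldr_lie (j : ℕ) :
    (lowerCentralSeries R L M j).toSubmodule =
      span R {u | ∃ (l : List L) (m : M), l.length = j ∧ l.foldr (⁅·, ·⁆) m = u} := by
  induction j with
  | zero => simp
  | succ j ih =>
    rw [lowerCentralSeries_succ, lie_toSubmodule_eq_map₂, ih, LieSubmodule.top_toSubmodule,
      ← span_univ, map₂_span_span]
    congr 1
    ext u
    constructor
    · rintro ⟨x, -, _, ⟨l, m, rfl, rfl⟩, rfl⟩
      exact ⟨x :: l, m, rfl, rfl⟩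
    · rintro ⟨_ | ⟨x, l⟩, m, hl, rfl⟩
      · simp at hl
      · exact ⟨x, trivial, _, ⟨l, m, by simpa using hl, rfl⟩, rfl⟩

theorem foldr_lie_mem_lowerCentralSeries (l : List L) (m : M) :
    l.foldr (⁅·, ·⁆) m ∈ lowerCentralSeries R L M l.length := by
  rw [← LieSubmodule.mem_toSubmodule, lowerCentralSeries_eq_span_foldr_lie]
  exact subset_span ⟨l, m, rfl, rfl⟩

-- Expand `⁅⁅y, u⁆, x⁆ = ⁅y, ⁅u, x⁆⁆ - ⁅u, ⁅y, x⁆⁆` along the entries of the right-normed bracket.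
theorem lie_foldr_lie_mem_map₂ (l : List L) (a : L) {t : ℕ} {x : M}
    (hx : x ∈ lowerCentralSeries R L M t) :
    ⁅l.foldr (⁅·, ·⁆) a, x⁆ ∈ map₂ (bracketBilin R L M) (span R {y | y ∈ a :: l})
      (lowerCentralSeries R L M (t + l.length)).toSubmodule := by
  induction l generalizing t x with
  | nil => exact apply_mem_map₂ _ (subset_span (by simp)) hx
  | cons y l ih =>
    have hmono : span R {z | z ∈ a :: l} ≤ span R {z | z ∈ a :: y :: l} :=
      span_mono fun z hz => by simp only [Set.mem_ofPred_eq, List.mem_cons] at hz ⊢; tauto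
    rw [List.foldr_cons, lie_lie]
    refine sub_mem ?_ ?_
    · exact apply_mem_map₂ (bracketBilin R L M) (subset_span (by simp))
        (map₂_lowerCentralSeries_le _ _ (ih hx))
    · have hyx : ⁅y, x⁆ ∈ lowerCentralSeries R L M (t + 1) := by
        rw [lowerCentralSeries_succ]
        exact LieSubmodule.lie_mem_lie (LieSubmodule.mem_top y) hx
      rw [List.length_cons, add_comm l.length, ← add_assoc]
      exact map₂_le_map₂_left hmono (ih hyx)

theorem lie_lowerCentralSeries_le (i j : ℕ) :
    ⁅lowerCentralSeries R L L i, lowerCentralSeries R L M j⁆ ≤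
      lowerCentralSeries R L M (i + j + 1) := by
  rw [← LieSubmodule.toSubmodule_le_toSubmodule, lie_toSubmodule_eq_map₂,
    lowerCentralSeries_eq_span_foldr_lie i, ← span_eq (lowerCentralSeries R L M j).toSubmodule,
    map₂_span_span, span_le]
  rintro _ ⟨_, ⟨l, a, rfl, rfl⟩, x, hx, rfl⟩
  rw [add_comm l.length]
  exact map₂_lowerCentralSeries_le _ _ (lie_foldr_lie_mem_map₂ l a hx)

end LowerCentralSeries

section Presentation

open LieModule Submodule

/-- The factor `γ_{j+1}(L) / γ_{j+2}(L)` of the lower central series; Mathlib's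
`lowerCentralSeries R L L j` is `γ_{j+1}(L)`. -/
abbrev LowerCentralFactor (R L : Type*) [CommRing R] [LieRing L] [LieAlgebra R L] (j : ℕ) :
    Type _ :=
  (lowerCentralSeries R L L j).toSubmodule ⧸
    (lowerCentralSeries R L L (j + 1)).toSubmodule.comap
      (lowerCentralSeries R L L j).toSubmodule.subtype

variable {R F L : Type*} [CommRing R] [LieRing F] [LieAlgebra R F] [LieRing L] [LieAlgebra R L]
  {π : F →ₗ⁅R⁆ L}

theorem comap_lowerCentralSeries_eq_sup_ker (hπ : Function.Surjective π) (j : ℕ) :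
    LieIdeal.comap π (lowerCentralSeries R L L j) = lowerCentralSeries R F F j ⊔ π.ker := by
  rw [← LieIdeal.lowerCentralSeries_map_eq j hπ, LieIdeal.comap_map_eq]
  exact congrArg SetLike.coe (LieIdeal.coe_map_of_surjective hπ)

theorem lie_lowerCentralSeries_one_sup_le (I : LieIdeal R F) (j : ℕ) :
    ⁅lowerCentralSeries R F F 1 ⊔ I, lowerCentralSeries R F F j ⊔ I⁆ ≤
      ⁅(⊤ : LieIdeal R F), lowerCentralSeries R F F (j + 1) ⊔ I⁆ := by
  have hI (J : LieIdeal R F) :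
      ⁅J, I⁆ ≤ ⁅(⊤ : LieIdeal R F), lowerCentralSeries R F F (j + 1) ⊔ I⁆ :=
    LieSubmodule.mono_lie le_top le_sup_right
  have hγ : ⁅lowerCentralSeries R F F 1, lowerCentralSeries R F F j⁆ ≤
      ⁅(⊤ : LieIdeal R F), lowerCentralSeries R F F (j + 1) ⊔ I⁆ := by
    refine (lie_lowerCentralSeries_le 1 j).trans ?_
    rw [add_comm 1 j, lowerCentralSeries_succ]
    exact LieSubmodule.mono_lie_right _ le_sup_left
  rw [LieSubmodule.sup_lie, LieSubmodule.lie_sup, LieSubmodule.lie_comm I]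
  exact sup_le (sup_le hγ (hI _)) (hI _)

/-- The bracket `F × K → F / D`, for ideals `K` and `D` of `F`. -/
def bracketMod (K D : LieIdeal R F) : F →ₗ[R] K.toSubmodule →ₗ[R] F ⧸ D.toSubmodule :=
  ((bracketBilin R F F).compr₂ D.toSubmodule.mkQ).compl₂ K.toSubmodule.subtype

theorem map₂_bracketMod_top (K D : LieIdeal R F) (S : Submodule R F) :
    map₂ (bracketMod K D) S ⊤ =
      (map₂ (bracketBilin R F F) S K.toSubmodule).map D.toSubmodule.mkQ := by
  rw [bracketMod, map₂_compl₂_subtype_top, map_map₂]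

theorem map₂_bracketMod_top_top (K D : LieIdeal R F) :
    map₂ (bracketMod K D) ⊤ ⊤ =
      (⁅(⊤ : LieIdeal R F), K⁆ : LieIdeal R F).toSubmodule.map D.toSubmodule.mkQ := by
  rw [map₂_bracketMod_top, lie_toSubmodule_eq_map₂, LieSubmodule.top_toSubmodule]

theorem mem_ker_bracketMod {I K D : LieIdeal R F} (h : ⁅I, K⁆ ≤ D) {x : F} (hx : x ∈ I) :
    x ∈ LinearMap.ker (bracketMod K D) := by
  ext y
  exact (Submodule.Quotient.mk_eq_zero _).2 (h (LieSubmodule.lie_mem_lie hx y.2))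

theorem mem_ker_flip_bracketMod {J K D : LieIdeal R F} (h : ⁅(⊤ : LieIdeal R F), J⁆ ≤ D)
    {y : K.toSubmodule} (hy : (y : F) ∈ J) : y ∈ LinearMap.ker (bracketMod K D).flip := by
  ext x
  exact (Submodule.Quotient.mk_eq_zero _).2
    (h (LieSubmodule.lie_mem_lie (LieSubmodule.mem_top x) hy))

theorem bracketMod_foldr_lie_mem_map₂ {K D : LieIdeal R F} {l : List F} {a : F}
    (hK : lowerCentralSeries R F F l.length ≤ K) (hu : l.foldr (⁅·, ·⁆) a ∈ K) (x : F) :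
    bracketMod K D x ⟨l.foldr (⁅·, ·⁆) a, hu⟩ ∈
      map₂ (bracketMod K D) (span R {y | y ∈ a :: l}) ⊤ := by
  have hux := lie_foldr_lie_mem_map₂ (R := R) l a (t := 0) (LieSubmodule.mem_top x)
  rw [zero_add] at hux
  rw [map₂_bracketMod_top]
  refine ⟨⁅x, l.foldr (⁅·, ·⁆) a⁆, ?_, rfl⟩
  rw [← lie_skew]
  exact neg_mem (map₂_le_map₂_right hK hux)

/-- The map `π⁻¹(γ_{j+1}(L)) → γ_{j+1}(L) / γ_{j+2}(L)` induced by a homomorphism `π` onto `L`. -/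
def toLowerCentralFactor (π : F →ₗ⁅R⁆ L) (j : ℕ) :
    (LieIdeal.comap π (lowerCentralSeries R L L j)).toSubmodule →ₗ[R] LowerCentralFactor R L j :=
  mkQ _ ∘ₗ (π : F →ₗ[R] L).restrict fun _ hx => LieIdeal.mem_comap.1 hx

theorem toLowerCentralFactor_surjective (hπ : Function.Surjective π) (j : ℕ) :
    Function.Surjective (toLowerCentralFactor π j) := by
  refine (mkQ_surjective _).comp ?_
  rintro ⟨y, hy⟩
  obtain ⟨x, rfl⟩ := hπ y
  exact ⟨⟨x, LieIdeal.mem_comap.2 hy⟩, rfl⟩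

theorem toLowerCentralFactor_eq_zero_iff {j : ℕ}
    {y : (LieIdeal.comap π (lowerCentralSeries R L L j)).toSubmodule} :
    toLowerCentralFactor π j y = 0 ↔
      (y : F) ∈ LieIdeal.comap π (lowerCentralSeries R L L (j + 1)) := by
  rw [LieIdeal.mem_comap]
  exact Submodule.Quotient.mk_eq_zero _

theorem exists_foldr_lie_notMem_comap (hπ : Function.Surjective π) {j : ℕ}
    (hj : lowerCentralSeries R L L (j + 1) ≠ lowerCentralSeries R L L j) :
    ∃ (l : List F) (a : F), l.length = j ∧
      l.foldr (⁅·, ·⁆) a ∉ LieIdeal.comap π (lowerCentralSeries R L L (j + 1)) := by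
  by_contra! h
  refine hj ((antitone_lowerCentralSeries R L L j.le_succ).antisymm ?_)
  rw [← LieIdeal.lowerCentralSeries_map_eq j hπ, LieIdeal.map_le_iff_le_comap,
    ← LieSubmodule.toSubmodule_le_toSubmodule, lowerCentralSeries_eq_span_foldr_lie, span_le]
  rintro _ ⟨l, a, hl, rfl⟩
  exact h l a hl

end Presentation

section General

open LieModule Submodule Cardinal

universe u v w

theorem dim_bracket_quotient_le_sub_general {k : Type u} [Field k] {F : Type v} {L : Type w}
    [LieRing F] [LieAlgebra k F] [LieRing L] [LieAlgebra k L] {π : F →ₗ⁅k⁆ L}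
    (hπ : Function.Surjective π) (j : ℕ)
    (hj : lowerCentralSeries k L L (j + 1) ≠ lowerCentralSeries k L L j) :
    let A : LieIdeal k F := ⁅(⊤ : LieIdeal k F), lowerCentralSeries k F F j ⊔ π.ker⁆
    let B : LieIdeal k F := ⁅lowerCentralSeries k F F (j + 1) ⊔ π.ker, (⊤ : LieIdeal k F)⁆
    lift.{w} (Module.rank k (A.toSubmodule ⧸ B.toSubmodule.comap A.toSubmodule.subtype)) +
        lift.{v} (Module.rank k (L ⧸ (lowerCentralSeries k L L 1).toSubmodule)) ≤
      lift.{v} (Module.rank k (L ⧸ (lowerCentralSeries k L L 1).toSubmodule) *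
        Module.rank k (LowerCentralFactor k L j) + (j + 1 : ℕ)) := by
  intro A B
  let K (t : ℕ) : LieIdeal k F := LieIdeal.comap π (lowerCentralSeries k L L t)
  have hK (t : ℕ) : K t = lowerCentralSeries k F F t ⊔ π.ker :=
    comap_lowerCentralSeries_eq_sup_ker hπ t
  have hA : A = ⁅(⊤ : LieIdeal k F), K j⁆ := by rw [hK]
  have hB : B = ⁅(⊤ : LieIdeal k F), K (j + 1)⁆ := by rw [hK, LieSubmodule.lie_comm]
  have hKB : ⁅K 1, K j⁆ ≤ B := by
    rw [hB, hK, hK, hK]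
    exact lie_lowerCentralSeries_one_sup_le π.ker j
  let p : F →ₗ[k] L ⧸ (lowerCentralSeries k L L 1).toSubmodule := mkQ _ ∘ₗ (π : F →ₗ[k] L)
  have hp : Function.Surjective p := (mkQ_surjective _).comp hπ
  have hpker : LinearMap.ker p ≤ LinearMap.ker (bracketMod (K j) B) := fun x hx =>
    mem_ker_bracketMod hKB (LieIdeal.mem_comap.2 ((Submodule.Quotient.mk_eq_zero _).1 hx))
  have hqker : LinearMap.ker (toLowerCentralFactor π j) ≤
      LinearMap.ker (bracketMod (K j) B).flip := fun y hy =>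
    mem_ker_flip_bracketMod hB.ge (toLowerCentralFactor_eq_zero_iff.1 hy)
  obtain ⟨l, a, rfl, hu⟩ := exists_foldr_lie_notMem_comap hπ hj
  have hγK : lowerCentralSeries k F F l.length ≤ K l.length := by
    rw [hK]
    exact le_sup_left
  let u : (K l.length).toSubmodule :=
    ⟨l.foldr (⁅·, ·⁆) a, hγK (foldr_lie_mem_lowerCentralSeries (R := k) l a)⟩
  let S : Submodule k F := span k {y | y ∈ a :: l}
  have hS : Module.rank k (S.map p) ≤ (l.length + 1 : ℕ) :=
    lift_le_nat_iff.1 <| (lift_rank_map_le p S).trans <|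
      lift_le_nat_iff.2 (rank_span_list_le (a :: l))
  have hrank := lift_rank_map₂_top_add_lift_rank_le_of_surjective hp
    (toLowerCentralFactor_surjective hπ l.length) hpker hqker S (n₀ := u)
    (toLowerCentralFactor_eq_zero_iff.not.2 hu) (bracketMod_foldr_lie_mem_map₂ hγK u.2)
  rw [map₂_bracketMod_top_top, ← hA, ← rank_quotient_comap_subtype] at hrank
  exact hrank.trans (lift_le.2 (by gcongr))

end General

/-- Let `L` be a finite-dimensional nilpotent Lie algebra of class `c` with `dim L = n` and
`dim γ₂(L) = m`, let `π : F → L` be a free presentation with `R = ker π`, and let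
`2 ≤ i ≤ min(n−m, c)`.  Then the vector space `[F, γ_i(F) + R] / [γ_{i+1}(F) + R, F]` has
dimension at most `(n−m)·dim(γ_i(L)/γ_{i+1}(L)) − (n−m−i)` (stated additively, so that no
truncated subtraction of naturals is involved).
Here `γ_j` is `LieModule.lowerCentralSeries _ _ _ (j-1)`. -/
theorem dim_bracket_quotient_le_sub
    (k : Type*) [Field k] (L : Type*) [LieRing L] [LieAlgebra k L]
    [FiniteDimensional k L] (c : ℕ)
    (hc₁ : LieModule.lowerCentralSeries k L L c = ⊥)
    (hc₂ : LieModule.lowerCentralSeries k L L (c - 1) ≠ ⊥)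
    (n m : ℕ) (hn : Module.finrank k L = n)
    (hm : Module.finrank k (LieModule.lowerCentralSeries k L L 1 : LieSubmodule k L L) = m)
    (X : Type*) (π : FreeLieAlgebra k X →ₗ⁅k⁆ L) (hπ : Function.Surjective π)
    (i : ℕ) (hi₂ : 2 ≤ i) (hic : i ≤ min (n - m) c) :
    let F := FreeLieAlgebra k X
    let R : LieIdeal k F := π.ker
    -- `[F, γ_i(F) + R]`
    let A : Submodule k F :=
      (⁅(⊤ : LieIdeal k F),
          LieModule.lowerCentralSeries k F F (i - 1) ⊔ R⁆ : LieIdeal k F).toSubmodule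
    -- `[γ_{i+1}(F) + R, F]`
    let B : Submodule k F :=
      (⁅(LieModule.lowerCentralSeries k F F i ⊔ R : LieIdeal k F),
          (⊤ : LieIdeal k F)⁆ : LieIdeal k F).toSubmodule
    -- `γ_i(L)` as a subspace of `L`
    let Gi : Submodule k L := (LieModule.lowerCentralSeries k L L (i - 1)).toSubmodule
    -- `dim(γ_i(L)/γ_{i+1}(L))`
    let d : ℕ := Module.finrank k
      (↥Gi ⧸ ((LieModule.lowerCentralSeries k L L i).toSubmodule).comap Gi.subtype)
    Module.rank k (↥A ⧸ B.comap A.subtype) + ((n - m - i : ℕ) : Cardinal) ≤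
      (((n - m) * d : ℕ) : Cardinal) := by
  intro F R A B Gi d
  obtain ⟨j, rfl⟩ : ∃ j, i = j + 1 := ⟨i - 1, by omega⟩
  obtain ⟨hjm, hjc⟩ := le_min_iff.1 hic
  have hfactor : LieModule.lowerCentralSeries k L L (j + 1) ≠
      LieModule.lowerCentralSeries k L L j := fun h => hc₂ <| by
    rw [lowerCentralSeries_eq_of_succ_eq h (t := c - 1) (by omega),
      ← lowerCentralSeries_eq_of_succ_eq h (t := c) (by omega), hc₁]
  have habel : Module.rank k (L ⧸ (LieModule.lowerCentralSeries k L L 1).toSubmodule) =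
      (n - m : ℕ) := by
    rw [← Module.finrank_eq_rank, ← hn, ← hm]
    exact congrArg _ (Nat.eq_sub_of_add_eq (Submodule.finrank_quotient_add_finrank _))
  have hd : Module.rank k (LowerCentralFactor k L j) = d := (Module.finrank_eq_rank _ _).symm
  have hgeneral := dim_bracket_quotient_le_sub_general hπ j hfactor
  rw [habel, hd, ← Nat.cast_mul] at hgeneral
  exact add_natCast_sub_le_of_lift_add_le hgeneral hjm
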